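/- Monotonicity of MAD intermediate weights: for every item i ∈ (∪_{u ∈ I} S_u) ∪ S_v, one has w'_init(i) ≥ w_init(i), w'_trunc(i) ≥ w_trunc(i), and w'_reroute(i) ≥ w_reroute(i), where the unprimed quantities are taken to be 0 on items outside ∪_{u ∈ I} S_u. -/

import Mathlib

/-! All three quantities are sums of nonnegative terms over the adaptive users holding an item, or
monotone functions of such sums. Whether a user is adaptive depends only on that user's own set,
so enlarging `I` enlarges the index sets (`holders_mono`), which gives monotonicity of `w_init`,
and hence of `w_trunc`.

For `w_reroute`, the excess fraction `r(i)` is a function of `w_init(i)` alone, namely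
`max (1 - τ / w_init(i)) 0`, which is nondecreasing in `w_init(i)` (`rFrac_mono`). Hence every `e_u`
is nondecreasing in `I`. Since `b_min ≥ 1/2` and `d_max ≥ 4` force `α ≥ 1/4`, the coefficient
`α / d_max` is nonnegative, so both the summands and the index set of `w_reroute` grow.
-/


open Finset

/-- The set of adaptive users: those `u ∈ I` with `⌈1/b_min²⌉ ≤ |S_u| ≤ d_max`. -/
noncomputable def adaptSet {ι A : Type*} (I : Finset ι) (S : ι → Finset A)
    (bmin dmax : ℝ) : Finset ι :=
  I.filter (fun u => ⌈1 / bmin ^ 2⌉₊ ≤ (S u).card ∧ ((S u).card : ℝ) ≤ dmax)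

/-- Initial weights: `w_init(i) = Σ_{u ∈ I_adapt, i ∈ S_u} 1/|S_u|`. -/
noncomputable def wInit {ι A : Type*} [DecidableEq A] (I : Finset ι) (S : ι → Finset A)
    (bmin dmax : ℝ) (i : A) : ℝ :=
  ∑ u ∈ (adaptSet I S bmin dmax).filter (fun u => i ∈ S u), (1 : ℝ) / (S u).card

/-- Truncated weights: `w_trunc(i) = min{w_init(i), τ}`. -/
noncomputable def wTrunc {ι A : Type*} [DecidableEq A] (I : Finset ι) (S : ι → Finset A)
    (bmin dmax τ : ℝ) (i : A) : ℝ :=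
  min (wInit I S bmin dmax i) τ

/-- Excess fraction: `r(i) = (w_init(i) − w_trunc(i))/w_init(i)` when `w_init(i) > 0`,
and `0` otherwise. -/
noncomputable def rFrac {ι A : Type*} [DecidableEq A] (I : Finset ι) (S : ι → Finset A)
    (bmin dmax τ : ℝ) (i : A) : ℝ :=
  if 0 < wInit I S bmin dmax i then
    (wInit I S bmin dmax i - wTrunc I S bmin dmax τ i) / wInit I S bmin dmax i
  else 0

/-- Excess weight returned to a user: `e_u = (1/|S_u|)·Σ_{i ∈ S_u} r(i)`. -/
noncomputable def eUser {ι A : Type*} [DecidableEq A] (I : Finset ι) (S : ι → Finset A)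
    (bmin dmax τ : ℝ) (u : ι) : ℝ :=
  (1 / ((S u).card : ℝ)) * ∑ i ∈ S u, rFrac I S bmin dmax τ i

/-- Rerouted weights: `w_reroute(i) = Σ_{u ∈ I_adapt, i ∈ S_u} α·e_u/d_max`. -/
noncomputable def wReroute {ι A : Type*} [DecidableEq A] (I : Finset ι) (S : ι → Finset A)
    (bmin dmax τ α : ℝ) (i : A) : ℝ :=
  ∑ u ∈ (adaptSet I S bmin dmax).filter (fun u => i ∈ S u),
    α * eUser I S bmin dmax τ u / dmax

/-- Final MAD weight:
`w(i) = w_trunc(i) + w_reroute(i) + Σ_{u ∈ I_adapt, i ∈ S_u} (w_b^u(i) − 1/|S_u|)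
      + Σ_{u ∈ I∖I_adapt, i ∈ S_u} w_b^u(i)`. -/
noncomputable def wFinal {ι A : Type*} [DecidableEq ι] [DecidableEq A] (I : Finset ι)
    (S : ι → Finset A) (bmin dmax τ α : ℝ) (wb : ι → A → ℝ) (i : A) : ℝ :=
  wTrunc I S bmin dmax τ i + wReroute I S bmin dmax τ α i +
    (∑ u ∈ (adaptSet I S bmin dmax).filter (fun u => i ∈ S u),
      (wb u i - 1 / ((S u).card : ℝ))) +
    ∑ u ∈ (I \ adaptSet I S bmin dmax).filter (fun u => i ∈ S u), wb u i

section

variable {ι A : Type*} [DecidableEq A] {I J : Finset ι} (S : ι → Finset A) (bmin dmax : ℝ)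

lemma holders_mono (h : I ⊆ J) (i : A) :
    (adaptSet I S bmin dmax).filter (fun u => i ∈ S u) ⊆
      (adaptSet J S bmin dmax).filter (fun u => i ∈ S u) :=
  filter_subset_filter _ (filter_subset_filter _ h)

lemma wInit_mono (h : I ⊆ J) (i : A) :
    wInit I S bmin dmax i ≤ wInit J S bmin dmax i :=
  sum_le_sum_of_subset_of_nonneg (holders_mono S bmin dmax h i) fun _ _ _ => by positivity

lemma wTrunc_mono (h : I ⊆ J) (τ : ℝ) (i : A) :
    wTrunc I S bmin dmax τ i ≤ wTrunc J S bmin dmax τ i :=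
  min_le_min_right τ (wInit_mono S bmin dmax h i)

lemma rFrac_nonneg (I : Finset ι) (τ : ℝ) (i : A) : 0 ≤ rFrac I S bmin dmax τ i := by
  unfold rFrac wTrunc
  split_ifs with h
  · exact div_nonneg (sub_nonneg.2 (min_le_left _ _)) h.le
  · exact le_rfl

lemma rFrac_mono (h : I ⊆ J) {τ : ℝ} (hτ : 0 ≤ τ) (i : A) :
    rFrac I S bmin dmax τ i ≤ rFrac J S bmin dmax τ i := by
  by_cases hI : 0 < wInit I S bmin dmax i
  · have hle := wInit_mono S bmin dmax h i
    have hJ := hI.trans_le hle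
    -- For `w > 0`, `(w - min w τ) / w = 1 - min 1 (τ / w)`, and `τ / w` is nonincreasing in `w`.
    unfold rFrac wTrunc
    rw [if_pos hI, if_pos hJ, sub_div, sub_div, div_self hI.ne', div_self hJ.ne']
    rw [← min_div_div_right hI.le, ← min_div_div_right hJ.le, div_self hI.ne', div_self hJ.ne']
    exact sub_le_sub_left (min_le_min_left _ (div_le_div_of_nonneg_left hτ hI hle)) _
  · rw [rFrac, if_neg hI]
    exact rFrac_nonneg S bmin dmax J τ i

lemma eUser_nonneg (I : Finset ι) (τ : ℝ) (u : ι) : 0 ≤ eUser I S bmin dmax τ u :=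
  mul_nonneg (by positivity) (sum_nonneg fun i _ => rFrac_nonneg S bmin dmax I τ i)

lemma eUser_mono (h : I ⊆ J) {τ : ℝ} (hτ : 0 ≤ τ) (u : ι) :
    eUser I S bmin dmax τ u ≤ eUser J S bmin dmax τ u :=
  mul_le_mul_of_nonneg_left (sum_le_sum fun i _ => rFrac_mono S bmin dmax h hτ i) (by positivity)

lemma wReroute_mono (h : I ⊆ J) {τ α : ℝ} (hτ : 0 ≤ τ) (hα : 0 ≤ α) (hd : 0 ≤ dmax) (i : A) :
    wReroute I S bmin dmax τ α i ≤ wReroute J S bmin dmax τ α i :=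
  (sum_le_sum fun u _ => div_le_div_of_nonneg_right
    (mul_le_mul_of_nonneg_left (eUser_mono S bmin dmax h hτ u) hα) hd).trans
  (sum_le_sum_of_subset_of_nonneg (holders_mono S bmin dmax h i) fun u _ _ =>
    div_nonneg (mul_nonneg hα (eUser_nonneg S bmin dmax J τ u)) hd)

end

/-- The reroute discount factor is nonnegative: `1 / (2√d_max) ≤ 1/4` while `b_min ≥ 1/2`. -/
lemma discount_nonneg {bmin dmax : ℝ} (hd : 4 ≤ dmax) (hb : 1 / 2 ≤ bmin) :
    0 ≤ bmin - 1 / (2 * Real.sqrt dmax) := by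
  have hs : 2 ≤ Real.sqrt dmax := Real.le_sqrt_of_sq_le (by linarith)
  have : 1 / (2 * Real.sqrt dmax) ≤ 1 / 4 :=
    one_div_le_one_div_of_le (by norm_num) (by linarith)
  linarith

/-- **Monotonicity of MAD intermediate weights.** For every item
`i ∈ (∪_{u ∈ I} S_u) ∪ S_v`, one has `w'_init(i) ≥ w_init(i)`, `w'_trunc(i) ≥ w_trunc(i)`,
and `w'_reroute(i) ≥ w_reroute(i)` (the unprimed quantities vanish automatically on items
outside `∪_{u ∈ I} S_u`). -/
theorem mad_monotone {ι A : Type*} [DecidableEq ι] [DecidableEq A]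
    (I : Finset ι) (S : ι → Finset A) (v : ι) (hv : v ∉ I)
    (hne : ∀ u ∈ insert v I, (S u).Nonempty)
    (τ dmax bmin α : ℝ)
    (hτ : 1 ≤ τ) (hdmax : 4 ≤ dmax) (hbmin1 : 1 / 2 ≤ bmin) (hbmin2 : bmin ≤ 1)
    (hα : α = bmin - 1 / (2 * Real.sqrt dmax)) :
    ∀ i ∈ I.biUnion S ∪ S v,
      wInit I S bmin dmax i ≤ wInit (insert v I) S bmin dmax i ∧
      wTrunc I S bmin dmax τ i ≤ wTrunc (insert v I) S bmin dmax τ i ∧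
      wReroute I S bmin dmax τ α i ≤ wReroute (insert v I) S bmin dmax τ α i := by
  intro i _
  have h := subset_insert v I
  refine ⟨wInit_mono S bmin dmax h i, wTrunc_mono S bmin dmax h τ i, ?_⟩
  exact wReroute_mono S bmin dmax h (by linarith) (hα ▸ discount_nonneg hdmax hbmin1)
    (by linarith) i
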